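/- arXiv:2007.14088 — 3 statements merged into one kernel-verified Lean document; each statement's English description precedes it below -/
import Mathlib

section
/- Let F be a finite field of characteristic 2 with q = 2^n elements, and let G = C_16 × C_2. Then the unit group of the group algebra FG is isomorphic to C_16^n × C_8^n × C_4^{2n} × C_2^{20n} × C_{2^n - 1}. -/
/-- The cyclic group of order `m`, realized as `Multiplicative (ZMod m)`. -/
abbrev C (m : ℕ) : Type := Multiplicative (ZMod m)


theorem pi_count {ι : Type} [Fintype ι] (m : ι → ℕ) (hm : ∀ i, 1 < m i) (d : ℕ) :
    Nat.card (powMonoidHom d : ((i : ι) → C (m i)) →* _).ker = ∏ i, (m i).gcd d := by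
  have : ∀ i, NeZero (m i) := fun i => ⟨by have := hm i; omega⟩
  have h : ∀ i, Nat.card (powMonoidHom d : C (m i) →* _).ker = (m i).gcd d := fun i => by
    rw [IsCyclic.card_powMonoidHom_ker]; simp
  rw [← Finset.prod_congr rfl (fun i _ => h i), ← Nat.card_pi]
  refine Nat.card_congr (Equiv.trans (Equiv.subtypeEquivRight fun x => ?_)
    (Equiv.subtypePiEquivPi (p := fun i (b : C (m i)) => b ∈ (powMonoidHom d : C (m i) →* _).ker)))
  simp [MonoidHom.mem_ker, funext_iff]

theorem ker_congr {A B : Type*} [CommGroup A] [CommGroup B] (e : A ≃* B) (d : ℕ) :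
    Nat.card (powMonoidHom d : A →* A).ker = Nat.card (powMonoidHom d : B →* B).ker := by
  refine Nat.card_congr (Equiv.subtypeEquiv e.toEquiv fun x => ?_)
  simp [MonoidHom.mem_ker, ← map_pow]

def sumPi {α β : Type} (w : α ⊕ β → ℕ) : ((j : α ⊕ β) → C (w j)) ≃*
    ((i : α) → C (w (.inl i))) × ((i : β) → C (w (.inr i))) :=
  { Equiv.sumPiEquivProdPi (fun j => C (w j)) with map_mul' := fun _ _ => rfl }

theorem card_sub_sum {α β : Type} [Fintype α] [Fintype β] (p : α ⊕ β → Prop) :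
    Nat.card {c // p c} = Nat.card {a // p (.inl a)} + Nat.card {b // p (.inr b)} := by
  rw [Nat.card_congr Equiv.subtypeSum, Nat.card_sum]

theorem card_const {k : ℕ} (P : Prop) [Decidable P] :
    Nat.card {_a : Fin k // P} = if P then k else 0 := by
  by_cases h : P <;> simp [h]

theorem classify (V : Type*) [CommGroup V] [Finite V] (n : ℕ) (h16 : ∀ v : V, v ^ 16 = 1)
    (h1 : Nat.card (powMonoidHom 2 : V →* V).ker = 2 ^ (24 * n))
    (h2 : Nat.card (powMonoidHom 4 : V →* V).ker = 2 ^ (28 * n))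
    (h3 : Nat.card (powMonoidHom 8 : V →* V).ker = 2 ^ (30 * n))
    (h4 : Nat.card (powMonoidHom 16 : V →* V).ker = 2 ^ (31 * n)) :
    Nonempty (V ≃* ((Fin n → C 16) × (Fin n → C 8) × (Fin (2 * n) → C 4) ×
      (Fin (20 * n) → C 2))) := by
  classical
  obtain ⟨ι, _, m, hm, ⟨e⟩⟩ := CommGroup.equiv_prod_multiplicative_zmod_of_finite V
  have hdvd : ∀ i, m i ∣ 16 := by
    intro i
    have := h16 (e.symm (Pi.mulSingle i (Multiplicative.ofAdd 1)))
    rw [← map_pow, map_eq_one_iff _ e.symm.injective] at this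
    have := congrFun this i
    rw [Pi.pow_apply, Pi.mulSingle_eq_same, ← ofAdd_nsmul, Pi.one_apply, ofAdd_eq_one] at this
    rw [← ZMod.natCast_eq_zero_iff]
    simpa using this
  have hmem : ∀ i, m i ∈ ({2, 4, 8, 16} : Finset ℕ) := by
    intro i
    have h := hdvd i
    have h' := hm i
    have := Nat.le_of_dvd (by norm_num) h
    interval_cases hh : m i <;> revert h <;> decide
  have hc : ∀ d, Nat.card (powMonoidHom d : V →* V).ker =
      ∏ v ∈ ({2, 4, 8, 16} : Finset ℕ), (v.gcd d) ^ Nat.card {i // m i = v} := by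
    intro d
    rw [ker_congr e, pi_count m hm, ← Finset.prod_fiberwise_of_maps_to (fun i _ => hmem i)]
    refine Finset.prod_congr rfl fun v _ => ?_
    rw [Finset.prod_congr rfl (g := fun _ => v.gcd d), Finset.prod_const, Nat.card_eq_fintype_card,
      Fintype.card_subtype]
    intro i hi
    rw [(Finset.mem_filter.1 hi).2]
  have hz : ∀ v, v ≠ 2 → v ≠ 4 → v ≠ 8 → v ≠ 16 → Nat.card {i // m i = v} = 0 := by
    intro v a b c d
    have : IsEmpty {i // m i = v} := ⟨fun ⟨i, hi⟩ => by
      have := hmem i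
      simp only [Finset.mem_insert, Finset.mem_singleton] at this
      omega⟩
    simp
  rw [hc] at h1 h2 h3 h4
  generalize ha : Nat.card {i // m i = 2} = a at *
  generalize hb : Nat.card {i // m i = 4} = b at *
  generalize hcc : Nat.card {i // m i = 8} = c at *
  generalize hd : Nat.card {i // m i = 16} = d at *
  simp at h1 h2 h3 h4
  have p4 : ∀ x : ℕ, 4 ^ x = 2 ^ (2 * x) := fun x => by rw [pow_mul]; norm_num
  have p8 : ∀ x : ℕ, 8 ^ x = 2 ^ (3 * x) := fun x => by rw [pow_mul]; norm_num
  have p16 : ∀ x : ℕ, 16 ^ x = 2 ^ (4 * x) := fun x => by rw [pow_mul]; norm_num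
  simp only [p4, p8, p16, ← pow_add] at h1 h2 h3 h4
  have i1 := Nat.pow_right_injective le_rfl h1
  have i2 := Nat.pow_right_injective le_rfl h2
  have i3 := Nat.pow_right_injective le_rfl h3
  have i4 := Nat.pow_right_injective le_rfl h4
  let w : Fin n ⊕ Fin n ⊕ Fin (2 * n) ⊕ Fin (20 * n) → ℕ :=
    Sum.elim (fun _ => 16) (Sum.elim (fun _ => 8) (Sum.elim (fun _ => 4) (fun _ => 2)))
  have hw : ∀ v, Nat.card {i // m i = v} = Nat.card {j // w j = v} := by
    intro v
    rw [card_sub_sum, card_sub_sum, card_sub_sum]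
    simp only [w, Sum.elim_inl, Sum.elim_inr]
    rw [card_const, card_const, card_const, card_const]
    by_cases v2 : v = 2
    · subst v2; simp; omega
    by_cases v4 : v = 4
    · subst v4; simp; omega
    by_cases v8 : v = 8
    · subst v8; simp; omega
    by_cases v16 : v = 16
    · subst v16; simp; omega
    rw [hz v v2 v4 v8 v16]
    simp [Ne.symm v2, Ne.symm v4, Ne.symm v8, Ne.symm v16]
  let E := Equiv.ofFiberEquiv (fun v => (Finite.card_eq.1 (hw v)).some)
  have hE : ∀ i, w (E i) = m i := Equiv.ofFiberEquiv_map _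
  let t1 : ((i : ι) → C (m i)) ≃* ((i : ι) → C (w (E i))) :=
    MulEquiv.piCongrRight fun i => mulEquivOfCyclicCardEq (by rw [hE])
  let t2 : ((i : ι) → C (w (E i))) ≃* ((j : _) → C (w j)) :=
    ({ (Equiv.piCongrLeft (fun j => C (w j)) E).symm with map_mul' := fun _ _ => rfl } :
      ((j : _) → C (w j)) ≃* ((i : ι) → C (w (E i)))).symm
  let t5 : ((j : _) → C (w (.inr (.inr j)))) ≃* (Fin (2 * n) → C 4) × (Fin (20 * n) → C 2) :=
    sumPi _
  let t4 : ((j : _) → C (w (.inr j))) ≃*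
      (Fin n → C 8) × (Fin (2 * n) → C 4) × (Fin (20 * n) → C 2) :=
    (sumPi _).trans (MulEquiv.prodCongr (MulEquiv.refl (Fin n → C 8)) t5)
  let t3 : ((j : _) → C (w j)) ≃*
      (Fin n → C 16) × (Fin n → C 8) × (Fin (2 * n) → C 4) × (Fin (20 * n) → C 2) :=
    (sumPi w).trans (MulEquiv.prodCongr (MulEquiv.refl (Fin n → C 16)) t4)
  exact ⟨e.trans (t1.trans (t2.trans t3))⟩

open MonoidAlgebra in
theorem pow_char {F G : Type*} [Field F] [CharP F 2] [CommGroup G] (k : ℕ) (u : MonoidAlgebra F G) :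
    u ^ 2 ^ k = mapDomain (powMonoidHom (2 ^ k) : G →* G).range.subtype
      (map (iterateFrobenius F 2 k).toAddMonoidHom
        (mapDomain (powMonoidHom (2 ^ k) : G →* G).rangeRestrict u)) := by
  have : CharP (MonoidAlgebra F G) 2 :=
    charP_of_injective_algebraMap (algebraMap F (MonoidAlgebra F G)).injective 2
  have : iterateFrobenius (MonoidAlgebra F G) 2 k =
    (mapDomainRingHom F (powMonoidHom (2 ^ k) : G →* G).range.subtype).comp
     ((mapRingHom _ (iterateFrobenius F 2 k)).comp
       (mapDomainRingHom F (powMonoidHom (2 ^ k) : G →* G).rangeRestrict)) := by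
    apply MonoidAlgebra.ringHom_ext
    · intro r
      simp [iterateFrobenius_def, single_pow]
    · intro r
      simp [iterateFrobenius_def, single_pow]
  exact congrArg (fun f => f u) this

open MonoidAlgebra in
theorem pow_char_iff {F G : Type*} [Field F] [CharP F 2] [CommGroup G] (k : ℕ)
    (u : MonoidAlgebra F G) :
    u ^ 2 ^ k = 1 ↔ mapDomainRingHom F (powMonoidHom (2 ^ k) : G →* G).rangeRestrict u = 1 := by
  constructor
  · intro h
    have h1 : (1 : MonoidAlgebra F G) ^ 2 ^ k = 1 := one_pow _
    rw [← h1, pow_char, pow_char] at h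
    have h := map_injective _ (iterateFrobenius F 2 k).injective
      (mapDomain_injective (Subgroup.subtype_injective _) h)
    rw [mapDomain_one] at h
    exact h
  · intro h
    have h' : mapDomain (powMonoidHom (2 ^ k) : G →* G).rangeRestrict u = 1 := h
    have h1 : (1 : MonoidAlgebra F G) ^ 2 ^ k = 1 := one_pow _
    rw [← h1, pow_char, pow_char, h', mapDomain_one]

theorem card_ma {F G : Type*} [Field F] [Fintype F] [Finite G] :
    Nat.card (MonoidAlgebra F G) = Fintype.card F ^ Nat.card G := by
  have := Fintype.ofFinite G
  rw [Nat.card_congr MonoidAlgebra.coeffEquiv, Nat.card_congr Finsupp.equivFunOnFinite, Nat.card_fun]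
  simp

open MonoidAlgebra in
theorem count {F G : Type*} [Field F] [Fintype F] [CharP F 2] [CommGroup G] [Finite G] (k : ℕ) :
    Nat.card {u : MonoidAlgebra F G // u ^ 2 ^ k = 1} *
      Fintype.card F ^ Nat.card (powMonoidHom (2 ^ k) : G →* G).range =
      Fintype.card F ^ Nat.card G := by
  set φ := mapDomainRingHom F (powMonoidHom (2 ^ k) : G →* G).rangeRestrict with hφ
  have hsurj : Function.Surjective φ := by
    intro y
    obtain ⟨x, hx⟩ := Finsupp.mapDomain_surjective
      (powMonoidHom (2 ^ k) : G →* G).rangeRestrict_surjective y.coeff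
    refine ⟨.ofCoeff x, ?_⟩
    apply coeff_injective
    simpa [hφ] using hx
  have e : {u : MonoidAlgebra F G // u ^ 2 ^ k = 1} ≃ φ.toAddMonoidHom.ker :=
    Equiv.subtypeEquiv (Equiv.subRight 1) fun u => by
      rw [pow_char_iff, AddMonoidHom.mem_ker]
      change φ u = 1 ↔ φ (u - 1) = 0
      rw [map_sub, map_one, sub_eq_zero]
  rw [Nat.card_congr e, ← card_ma (F := F) (G := G), ← card_ma (F := F),
    ← AddSubgroup.card_mul_index φ.toAddMonoidHom.ker, AddSubgroup.index_ker,
    AddMonoidHom.range_eq_top.2 hsurj, AddSubgroup.card_top]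

theorem card1 : Nat.card (powMonoidHom (2 ^ 1) : (C 16 × C 2) →* _ ).range = 8 := by 
  rw [Nat.card_eq_fintype_card]
  decide +kernel
theorem card2 : Nat.card (powMonoidHom (2 ^ 2) : (C 16 × C 2) →* _ ).range = 4 := by 
  rw [Nat.card_eq_fintype_card]
  decide +kernel
theorem card3 : Nat.card (powMonoidHom (2 ^ 3) : (C 16 × C 2) →* _ ).range = 2 := by 
  rw [Nat.card_eq_fintype_card]
  decide +kernel
theorem card4 : Nat.card (powMonoidHom (2 ^ 4) : (C 16 × C 2) →* _ ).range = 1 := by 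
  rw [Nat.card_eq_fintype_card]
  decide +kernel

def splitEquiv {A B : Type*} [CommGroup A] [CommGroup B] (f : A →* B) (s : B →* A)
    (h : ∀ b, f (s b) = b) : A ≃* f.ker × B where
  toFun a := (⟨a * (s (f a))⁻¹, by simp [MonoidHom.mem_ker, h]⟩, f a)
  invFun p := p.1 * s p.2
  left_inv a := by simp
  right_inv p := by
    have : f p.1 = 1 := p.1.2
    ext <;> simp [h, this]
  map_mul' a b := by
    ext <;> simp
    rw [mul_mul_mul_comm a (s (f a))⁻¹, mul_comm (s (f a))⁻¹, mul_mul_mul_comm]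

noncomputable def aug (F G : Type*) [Field F] [CommGroup G] : (MonoidAlgebra F G) →ₐ[F] F :=
  MonoidAlgebra.lift F F G 1

theorem aug_pow (F : Type*) [Field F] [CharP F 2] (u : MonoidAlgebra F (C 16 × C 2)) :
    u ^ 16 = algebraMap F _ (aug F _ u ^ 16) := by
  have : CharP (MonoidAlgebra F (C 16 × C 2)) 2 :=
    charP_of_injective_algebraMap (algebraMap F (MonoidAlgebra F (C 16 × C 2))).injective 2
  have : iterateFrobenius (MonoidAlgebra F (C 16 × C 2)) 2 4 =
    (algebraMap F _).comp ((iterateFrobenius F 2 4).comp (aug F (C 16 × C 2)).toRingHom) := by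
    apply MonoidAlgebra.ringHom_ext
    · intro r
      simp [iterateFrobenius_def, aug, MonoidAlgebra.single_pow]
    · intro g
      have hg : g ^ 16 = 1 := by revert g; decide +kernel
      simp [iterateFrobenius_def, aug, MonoidAlgebra.single_pow, hg]
  exact congrArg (fun f => f u) this

theorem unit_group_stmt_2 (F : Type*) [Field F] [Fintype F] [CharP F 2]
    (n : ℕ) (hn : 0 < n) (hF : Fintype.card F = 2 ^ n) :
    Nonempty ((MonoidAlgebra F (C 16 × C 2))ˣ ≃*
      ((Fin (n) → C 16) × (Fin (n) → C 8) × (Fin (2 * n) → C 4) × (Fin (20 * n) → C 2) × C (2 ^ n - 1))) := by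
  have : Finite (MonoidAlgebra F (C 16 × C 2)) :=
    Finite.of_equiv _ (MonoidAlgebra.coeffEquiv).symm
  let f : (MonoidAlgebra F (C 16 × C 2))ˣ →* Fˣ := Units.map (aug F (C 16 × C 2) : _ →* F)
  let s : Fˣ →* (MonoidAlgebra F (C 16 × C 2))ˣ := Units.map
    (algebraMap F (MonoidAlgebra F (C 16 × C 2))).toMonoidHom
  have hfs : ∀ b, f (s b) = b := fun b => by ext; simp [f, s, aug]
  have hker : ∀ k, Nat.card (powMonoidHom (2 ^ k) : f.ker →* f.ker).ker =
      Nat.card {u : MonoidAlgebra F (C 16 × C 2) // u ^ 2 ^ k = 1} := by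
    intro k
    refine Nat.card_congr (Equiv.ofBijective
      (fun v => ⟨((v.1.1 : (MonoidAlgebra F (C 16 × C 2))ˣ) : MonoidAlgebra F (C 16 × C 2)), ?_⟩)
      ⟨?_, ?_⟩)
    · have h : (v.1 : f.ker) ^ 2 ^ k = 1 := v.2
      have := congrArg (fun x : f.ker => ((x.1 : (MonoidAlgebra F (C 16 × C 2))ˣ) :
        MonoidAlgebra F (C 16 × C 2))) h
      simpa using this
    · intro v v' h
      exact Subtype.ext (Subtype.ext (Units.ext (congrArg Subtype.val h)))
    · rintro ⟨u, hu⟩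
      let U : (MonoidAlgebra F (C 16 × C 2))ˣ := Units.ofPowEqOne u (2 ^ k) hu (by positivity)
      have hU : U ^ 2 ^ k = 1 := Units.ext (by simpa [U] using hu)
      have hfU : f U = 1 := by
        have h1 : f U ^ 2 ^ k = 1 := by rw [← map_pow, hU, map_one]
        have h2 : iterateFrobenius F 2 k (f U : F) = iterateFrobenius F 2 k 1 := by
          rw [iterateFrobenius_def, map_one]
          rw [← Units.val_pow_eq_pow_val, h1, Units.val_one]
        exact Units.ext ((iterateFrobenius F 2 k).injective h2)
      exact ⟨⟨⟨U, hfU⟩, Subtype.ext hU⟩, rfl⟩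
  have hG : Nat.card (C 16 × C 2) = 32 := by simp [Nat.card_prod]
  have hcount : ∀ k a b : ℕ, Nat.card (powMonoidHom (2 ^ k) : (C 16 × C 2) →* _).range = a →
      b + a = 32 → Nat.card (powMonoidHom (2 ^ k) : f.ker →* f.ker).ker = 2 ^ (b * n) := by
    intro k a b ha hb
    have h := count (F := F) (G := C 16 × C 2) k
    rw [ha, hG, hF, ← hker, ← hb, ← pow_mul, ← pow_mul] at h
    have h' : 2 ^ (n * (b + a)) = 2 ^ (b * n) * 2 ^ (n * a) := by rw [← pow_add]; ring_nf
    rw [h'] at h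
    exact Nat.eq_of_mul_eq_mul_right (by positivity) h
  obtain ⟨e⟩ := classify f.ker n (fun v => by
      apply Subtype.ext
      apply Units.ext
      have hv : aug F _ ((v.1 : (MonoidAlgebra F (C 16 × C 2))ˣ) : MonoidAlgebra F (C 16 × C 2)) = 1 :=
        congrArg Units.val v.2
      have := aug_pow F ((v.1 : (MonoidAlgebra F (C 16 × C 2))ˣ) : MonoidAlgebra F (C 16 × C 2))
      rw [hv, one_pow, map_one] at this
      simpa using this)
    (hcount 1 8 24 card1 rfl) (hcount 2 4 28 card2 rfl) (hcount 3 2 30 card3 rfl)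
    (hcount 4 1 31 card4 rfl)
  have ec : Fˣ ≃* C (2 ^ n - 1) := mulEquivOfCyclicCardEq (by
    classical
    rw [Nat.card_eq_fintype_card, Fintype.card_units, hF]; exact (Nat.card_zmod _).symm)
  exact ⟨(splitEquiv f s hfs).trans ((MulEquiv.prodCongr e ec).trans
    (MulEquiv.prodAssoc.trans (MulEquiv.prodCongr (MulEquiv.refl _)
      (MulEquiv.prodAssoc.trans (MulEquiv.prodCongr (MulEquiv.refl _) MulEquiv.prodAssoc)))))⟩
end

section
/- Let F be a finite field of characteristic p > 2 with q = p^n elements, and let G = C_8 × C_4. Then the unit group U(FG) is isomorphic to: C_{p^n-1}^{32} if q ≡ 1 (mod 8); C_{p^n-1}^4 × C_{p^{2n}-1}^{14} if q ≡ -1 (mod 8); C_{p^n-1}^4 × C_{p^{2n}-1}^{14} if q ≡ 3 (mod 8); C_{p^n-1}^{16} × C_{p^{2n}-1}^8 if q ≡ -3 (mod 8). -/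
namespace UG

abbrev G := C 8 × C 4

/-- encoding used to select orbit representatives -/
def enc (c : G) : ℕ := 4 * (Multiplicative.toAdd c.1).val + (Multiplicative.toAdd c.2).val

lemma fixed_mem {F K : Type*} [Field F] [Fintype F] [Field K] [Fintype K] [Algebra F K]
    (x : K) (hx : x ^ Fintype.card F = x) : ∃ y : F, algebraMap F K y = x := by
  have : Module.Finite F K := Module.Finite.of_finite
  have h := (IsGalois.mem_range_algebraMap_iff_fixed (F := F) x).2 (by
    intro f
    obtain ⟨i, rfl⟩ := (FiniteField.bijective_frobeniusAlgEquivOfAlgebraic_pow F K).2 f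
    simp only
    have h1 : FiniteField.frobeniusAlgEquivOfAlgebraic F K x = x := by simpa using hx
    generalize i.1 = j
    induction j with
    | zero => simp
    | succ j ih => rw [pow_succ, AlgEquiv.mul_apply, h1, ih])
  exact h

section chars
variable {K : Type*} [Field K] {ζ : K} (hζ : IsPrimitiveRoot ζ 8)

lemma four (hζ : IsPrimitiveRoot ζ 8) : (ζ ^ 2) ^ 4 = 1 := by
  rw [← pow_mul]; exact hζ.pow_eq_one

/-- the character of index c -/
noncomputable def chi (c : G) : G →* K where
  toFun g := AddChar.zmodChar 8 hζ.pow_eq_one (Multiplicative.toAdd c.1 * Multiplicative.toAdd g.1) *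
    AddChar.zmodChar 4 (four hζ) (Multiplicative.toAdd c.2 * Multiplicative.toAdd g.2)
  map_one' := by simp
  map_mul' g h := by
    simp only [Prod.fst_mul, Prod.snd_mul, toAdd_mul, mul_add, AddChar.map_add_eq_mul]
    ring

lemma chi_apply (c g : G) : chi hζ c g =
    AddChar.zmodChar 8 hζ.pow_eq_one (Multiplicative.toAdd c.1 * Multiplicative.toAdd g.1) *
    AddChar.zmodChar 4 (four hζ) (Multiplicative.toAdd c.2 * Multiplicative.toAdd g.2) := rfl

lemma chi_pow (c g : G) (q : ℕ) : chi hζ (c ^ q) g = chi hζ c g ^ q := by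
  simp only [chi_apply, Prod.pow_fst, Prod.pow_snd, toAdd_pow, smul_mul_assoc,
    AddChar.map_nsmul_eq_pow, mul_pow]

lemma chi_inj : Function.Injective (chi hζ) := by
  intro c d h
  have h1 := DFunLike.congr_fun h (Multiplicative.ofAdd 1, 1)
  have h2 := DFunLike.congr_fun h (1, Multiplicative.ofAdd 1)
  have hz2 : IsPrimitiveRoot (ζ ^ 2) 4 := hζ.pow (by norm_num) (by norm_num)
  simp only [chi_apply, toAdd_one, toAdd_ofAdd, mul_zero, mul_one, AddChar.map_zero_eq_one,
    one_mul, AddChar.zmodChar_apply] at h1 h2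
  have e1 := hζ.pow_inj (ZMod.val_lt _) (ZMod.val_lt _) h1
  have e2 := hz2.pow_inj (ZMod.val_lt _) (ZMod.val_lt _) h2
  exact Prod.ext (ZMod.val_injective 8 e1) (ZMod.val_injective 4 e2)

lemma all_zero {F : Type*} [Field F] [Algebra F K] (x : MonoidAlgebra F G)
    (hx : ∀ c, MonoidAlgebra.lift F K G (chi hζ c) x = 0) : x = 0 := by
  classical
  let A : Matrix G G K := Matrix.of fun c g => chi hζ c g
  have hA : IsUnit A := by
    rw [← Matrix.linearIndependent_rows_iff_isUnit]
    exact (linearIndependent_monoidHom G K).comp (chi hζ) (chi_inj hζ)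
  have hinj := Matrix.mulVec_injective_iff_isUnit.2 hA
  have : (fun g => algebraMap F K (x.coeff g)) = 0 := by
    apply hinj
    rw [Matrix.mulVec_zero]
    ext c
    rw [Pi.zero_apply, ← hx c, MonoidAlgebra.lift_apply', Finsupp.sum_fintype _ _ (by simp)]
    simp only [Matrix.mulVec, dotProduct, A, Matrix.of_apply]
    exact Finset.sum_congr rfl fun _ _ => mul_comm _ _
  ext g
  have h := congrFun this g
  simpa using h

end chars

lemma card_alg (F : Type*) [Field F] [Fintype F] :
    Nat.card (MonoidAlgebra F G) = Fintype.card F ^ 32 := by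
  have e : MonoidAlgebra F G ≃ (G → F) :=
    MonoidAlgebra.coeffEquiv.trans Finsupp.equivFunOnFinite
  rw [Nat.card_congr e, Nat.card_eq_fintype_card, Fintype.card_fun]
  rfl

lemma cyc {K : Type*} [Field K] [Fintype K] (m : ℕ) (h : Fintype.card K = m) :
    Nonempty (Kˣ ≃* C (m - 1)) := by
  have : Nat.card Kˣ = m - 1 := by rw [Nat.card_units, Nat.card_eq_fintype_card, h]
  rw [← this]
  exact ⟨(zmodCyclicMulEquiv inferInstance).symm⟩

lemma main (F : Type*) [Field F] [Fintype F] (p n : ℕ)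
    (hp : p.Prime) (hp2 : 2 < p) [CharP F p] (hn : 0 < n)
    (hF : Fintype.card F = p ^ n) (r N₁ N₂ : ℕ) (hr : p ^ n % 8 = r)
    (h1 : Fintype.card {c : G // c ^ r = c} = N₁)
    (h2 : Fintype.card {c : G // enc c < enc (c ^ r)} = N₂)
    (hcov : ∀ c : G, c ^ r = c ∨ enc c < enc (c ^ r) ∨
      ((c ^ r) ^ r = c ∧ enc (c ^ r) < enc ((c ^ r) ^ r)))
    (hN : N₁ + 2 * N₂ = 32) :
    Nonempty ((MonoidAlgebra F G)ˣ ≃*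
      ((Fin N₁ → C (p ^ n - 1)) × (Fin N₂ → C (p ^ (2 * n) - 1)))) := by
  classical
  haveI : Fact p.Prime := ⟨hp⟩
  let K := FiniteField.Extension F p 2
  letI : Fintype K := Fintype.ofFinite K
  have hK : Fintype.card K = p ^ (2 * n) := by
    rw [← Nat.card_eq_fintype_card, FiniteField.natCard_extension, Nat.card_eq_fintype_card, hF,
      ← pow_mul, mul_comm]
  have hpow : ∀ c : G, c ^ Fintype.card F = c ^ r := by
    intro c
    have h8 : c ^ 8 = 1 := by revert c; decide
    rw [hF, pow_eq_pow_mod _ h8, hr]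
  obtain ⟨ζ, hζ⟩ : ∃ ζ : K, IsPrimitiveRoot ζ 8 := by
    obtain ⟨g, hg⟩ := IsCyclic.exists_ofOrder_eq_natCard (α := Kˣ)
    have hd : 8 ∣ Nat.card Kˣ := by
      rw [Nat.card_units, Nat.card_eq_fintype_card, hK, mul_comm, pow_mul]
      have ho : Odd (p ^ n) := (hp.odd_of_ne_two (by omega)).pow
      have := Nat.eight_dvd_sq_sub_one_of_odd ho
      exact this
    obtain ⟨k, hk⟩ := hd
    refine ⟨((g ^ k : Kˣ) : K), ?_⟩
    rw [IsPrimitiveRoot.coe_units_iff]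
    have hg' : IsPrimitiveRoot g (Nat.card Kˣ) := hg ▸ IsPrimitiveRoot.orderOf g
    exact hg'.pow Nat.card_pos (by rw [hk, mul_comm])
  -- descent of fixed characters
  have hdesc : ∀ c : {c : G // c ^ r = c}, ∃ ψ : G →* F, ∀ g, algebraMap F K (ψ g) = chi hζ c g := by
    intro c
    have hv : ∀ g, ∃ y : F, algebraMap F K y = chi hζ c g := fun g => fixed_mem _ (by
      rw [← chi_pow, hpow, c.2])
    choose f hf using hv
    refine ⟨⟨⟨f, ?_⟩, ?_⟩, hf⟩
    · apply (algebraMap F K).injective; rw [hf]; simp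
    · intro a b
      apply (algebraMap F K).injective
      simp [hf]
  choose ψ hψ using hdesc
  have hψ' : ∀ c x, algebraMap F K (MonoidAlgebra.lift F F G (ψ c) x) =
      MonoidAlgebra.lift F K G (chi hζ c) x := by
    intro c x
    simp only [MonoidAlgebra.lift_apply', Finsupp.sum, map_sum, map_mul, hψ]
    simp
  have hfrob : ∀ c x, MonoidAlgebra.lift F K G (chi hζ (c ^ r)) x =
      (MonoidAlgebra.lift F K G (chi hζ c) x) ^ Fintype.card F := by
    intro c x
    rw [← FiniteField.frobeniusAlgHom_apply F K]
    simp only [MonoidAlgebra.lift_apply', Finsupp.sum, map_sum, map_mul, AlgHom.commutes]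
    refine Finset.sum_congr rfl fun g _ => ?_
    rw [FiniteField.frobeniusAlgHom_apply, ← chi_pow, hpow]
  let Φ : MonoidAlgebra F G →+* (({c : G // c ^ r = c} → F) × ({c : G // enc c < enc (c ^ r)} → K)) :=
    RingHom.prod (Pi.ringHom fun c => (MonoidAlgebra.lift F F G (ψ c)).toRingHom)
      (Pi.ringHom fun c => (MonoidAlgebra.lift F K G (chi hζ c)).toRingHom)
  have hinj : Function.Injective Φ := by
    rw [injective_iff_map_eq_zero]
    intro x hx
    have hx1 : ∀ c, MonoidAlgebra.lift F F G (ψ c) x = 0 := fun c => congrFun (congrArg Prod.fst hx) c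
    have hx2 : ∀ c : {c : G // enc c < enc (c ^ r)}, MonoidAlgebra.lift F K G (chi hζ c) x = 0 :=
      fun c => congrFun (congrArg Prod.snd hx) c
    apply all_zero hζ
    intro c
    rcases hcov c with h | h | ⟨h, h'⟩
    · rw [← hψ' ⟨c, h⟩, hx1, map_zero]
    · exact hx2 ⟨c, h⟩
    · rw [← h, hfrob, hx2 ⟨c ^ r, h'⟩, zero_pow Fintype.card_ne_zero]
  have hfin : Finite (MonoidAlgebra F G) := Finite.of_injective _ hinj
  have hbij : Function.Bijective Φ := by
    refine (Nat.bijective_iff_injective_and_card _).2 ⟨hinj, ?_⟩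
    rw [card_alg, Nat.card_eq_fintype_card, Fintype.card_prod, Fintype.card_fun, Fintype.card_fun,
      h1, h2, hK, hF, ← hN, ← pow_mul, ← pow_mul, ← pow_mul, ← pow_add]
    congr 1; ring
  obtain ⟨eF⟩ := cyc (K := F) _ hF
  obtain ⟨eK⟩ := cyc (K := K) _ hK
  have e1 := Fintype.equivFinOfCardEq h1
  have e2 := Fintype.equivFinOfCardEq h2
  refine ⟨(Units.mapEquiv (RingEquiv.ofBijective Φ hbij).toMulEquiv).trans
    (MulEquiv.prodUnits.trans (MulEquiv.prodCongr
      (MulEquiv.piUnits.trans ((MulEquiv.piCongrRight fun _ => eF).trans ?_))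
      (MulEquiv.piUnits.trans ((MulEquiv.piCongrRight fun _ => eK).trans ?_))))⟩
  · exact MulEquiv.arrowCongr e1 (MulEquiv.refl _)
  · exact MulEquiv.arrowCongr e2 (MulEquiv.refl _)

lemma modc (q r : ℕ) (hr : r < 8) (h : (q : ZMod 8) = (r : ZMod 8)) : q % 8 = r := by
  have := (ZMod.natCast_eq_natCast_iff' _ _ _).1 h
  rwa [Nat.mod_eq_of_lt hr] at this

end UG

theorem unit_group_stmt_5 (F : Type*) [Field F] [Fintype F] (p n : ℕ)
    (hp : p.Prime) (hp2 : 2 < p) [CharP F p] (hn : 0 < n)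
    (hF : Fintype.card F = p ^ n) :
    (((p ^ n : ZMod 8) = 1) →
      Nonempty ((MonoidAlgebra F (C 8 × C 4))ˣ ≃* ((Fin (32) → C (p ^ n - 1))))) ∧
    (((p ^ n : ZMod 8) = -1) →
      Nonempty ((MonoidAlgebra F (C 8 × C 4))ˣ ≃* ((Fin (4) → C (p ^ n - 1)) × (Fin (14) → C (p ^ (2 * n) - 1))))) ∧
    (((p ^ n : ZMod 8) = 3) →
      Nonempty ((MonoidAlgebra F (C 8 × C 4))ˣ ≃* ((Fin (4) → C (p ^ n - 1)) × (Fin (14) → C (p ^ (2 * n) - 1))))) ∧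
    (((p ^ n : ZMod 8) = -3) →
      Nonempty ((MonoidAlgebra F (C 8 × C 4))ˣ ≃* ((Fin (16) → C (p ^ n - 1)) × (Fin (8) → C (p ^ (2 * n) - 1))))) := by
  refine ⟨fun h => ?_, fun h => ?_, fun h => ?_, fun h => ?_⟩
  · obtain ⟨e⟩ := UG.main F p n hp hp2 hn hF 1 32 0
      (UG.modc _ _ (by norm_num) (by push_cast; rw [h])) (by decide +kernel) (by decide +kernel)
      (by decide +kernel) (by norm_num)
    exact ⟨e.trans MulEquiv.prodUnique⟩
  · exact UG.main F p n hp hp2 hn hF 7 4 14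
      (UG.modc _ _ (by norm_num) (by push_cast; rw [h]; decide)) (by decide +kernel)
      (by decide +kernel) (by decide +kernel) (by norm_num)
  · exact UG.main F p n hp hp2 hn hF 3 4 14
      (UG.modc _ _ (by norm_num) (by push_cast; rw [h])) (by decide +kernel)
      (by decide +kernel) (by decide +kernel) (by norm_num)
  · exact UG.main F p n hp hp2 hn hF 5 16 8
      (UG.modc _ _ (by norm_num) (by push_cast; rw [h]; decide)) (by decide +kernel)
      (by decide +kernel) (by decide +kernel) (by norm_num)
end

section
/- Let F be a finite field of characteristic p > 2 with q = p^n elements, and let G = C_4 × C_2 × C_2 × C_2. Then the unit group U(FG) is isomorphic to: C_{p^n-1}^{32} if q ≡ 1 (mod 4); C_{p^n-1}^{16} × C_{p^{2n}-1}^8 if q ≡ -1 (mod 4). -/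
open MonoidAlgebra in
theorem coeff_mul_zmod {S : Type*} [CommRing S] (m : ℕ) [NeZero m]
    (x y : MonoidAlgebra S (C m)) (k : ZMod m) :
    (x * y).coeff (Multiplicative.ofAdd k) =
      ∑ j : ZMod m, x.coeff (Multiplicative.ofAdd j) * y.coeff (Multiplicative.ofAdd (k - j)) := by
  rw [coeff_mul_apply_left, Finsupp.sum_fintype _ _ (by simp)]
  refine Fintype.sum_equiv Multiplicative.toAdd _ _ fun j => ?_
  have : j⁻¹ * Multiplicative.ofAdd k = Multiplicative.ofAdd (k - Multiplicative.toAdd j) := by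
    rw [ofAdd_sub, div_eq_mul_inv, mul_comm]; rfl
  rw [this]; rfl

theorem zsum2 {S : Type*} [AddCommMonoid S] (f : ZMod 2 → S) : ∑ j, f j = f 0 + f 1 :=
  Fin.sum_univ_two f

theorem zsum4 {S : Type*} [AddCommMonoid S] (f : ZMod 4 → S) :
    ∑ j, f j = f 0 + f 1 + f 2 + f 3 :=
  Fin.sum_univ_four f

theorem ma_ext {S : Type*} [CommRing S] (m : ℕ) {x y : MonoidAlgebra S (C m)}
    (h : ∀ k : ZMod m, x.coeff (Multiplicative.ofAdd k) = y.coeff (Multiplicative.ofAdd k)) :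
    x = y := by
  apply MonoidAlgebra.coeff_injective
  ext k
  exact h (Multiplicative.toAdd k)

noncomputable def e2 (S : Type*) [CommRing S] (t : S) (ht : 2 * t = 1) :
    MonoidAlgebra S (C 2) ≃+* S × S where
  toFun x := (x.coeff (Multiplicative.ofAdd 0) + x.coeff (Multiplicative.ofAdd 1),
    x.coeff (Multiplicative.ofAdd 0) - x.coeff (Multiplicative.ofAdd 1))
  invFun y := MonoidAlgebra.single (Multiplicative.ofAdd 0) (t * (y.1 + y.2)) +
    MonoidAlgebra.single (Multiplicative.ofAdd 1) (t * (y.1 - y.2))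
  left_inv x := by
    apply ma_ext
    have h : ∀ k : ZMod 2, k = 0 ∨ k = 1 := by decide
    intro k
    rcases h k with rfl | rfl <;>
      simp [MonoidAlgebra.coeff_add, MonoidAlgebra.coeff_single, Finsupp.single_apply, -ofAdd_zero] <;>
      linear_combination (x.coeff (Multiplicative.ofAdd _)) * ht
  right_inv y := by
    ext <;>
      simp [MonoidAlgebra.coeff_add, MonoidAlgebra.coeff_single, Finsupp.single_apply, -ofAdd_zero]
    · linear_combination y.1 * ht
    · linear_combination y.2 * ht
  map_add' x y := by
    ext <;> simp only [MonoidAlgebra.coeff_add, Finsupp.add_apply, Prod.fst_add, Prod.snd_add] <;>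
      ring
  map_mul' x y := by
    have h : (0 - 1 : ZMod 2) = 1 := by decide
    ext <;> simp only [coeff_mul_zmod, zsum2, Prod.fst_mul, Prod.snd_mul, sub_zero, sub_self, h] <;>
      ring

noncomputable def e4 (S : Type*) [CommRing S] (t : S) (ht : 2 * t = 1) :
    MonoidAlgebra S (C 4) ≃+* S × S × QuadraticAlgebra S (-1) 0 where
  toFun x := (x.coeff (Multiplicative.ofAdd 0) + x.coeff (Multiplicative.ofAdd 1) +
      x.coeff (Multiplicative.ofAdd 2) + x.coeff (Multiplicative.ofAdd 3),
    x.coeff (Multiplicative.ofAdd 0) - x.coeff (Multiplicative.ofAdd 1) +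
      x.coeff (Multiplicative.ofAdd 2) - x.coeff (Multiplicative.ofAdd 3),
    ⟨x.coeff (Multiplicative.ofAdd 0) - x.coeff (Multiplicative.ofAdd 2),
      x.coeff (Multiplicative.ofAdd 1) - x.coeff (Multiplicative.ofAdd 3)⟩)
  invFun y :=
    MonoidAlgebra.single (Multiplicative.ofAdd 0) (t * (t * (y.1 + y.2.1) + y.2.2.re)) +
    MonoidAlgebra.single (Multiplicative.ofAdd 1) (t * (t * (y.1 - y.2.1) + y.2.2.im)) +
    MonoidAlgebra.single (Multiplicative.ofAdd 2) (t * (t * (y.1 + y.2.1) - y.2.2.re)) +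
    MonoidAlgebra.single (Multiplicative.ofAdd 3) (t * (t * (y.1 - y.2.1) - y.2.2.im))
  left_inv x := by
    apply ma_ext
    have h : ∀ k : ZMod 4, k = 0 ∨ k = 1 ∨ k = 2 ∨ k = 3 := by decide
    have h1 : (0 : ZMod 4) ≠ 1 ∧ (0 : ZMod 4) ≠ 2 ∧ (0 : ZMod 4) ≠ 3 ∧ (1 : ZMod 4) ≠ 2 ∧
      (1 : ZMod 4) ≠ 3 ∧ (2 : ZMod 4) ≠ 3 := by decide
    obtain ⟨h1, h2, h3, h4, h5, h6⟩ := h1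
    obtain ⟨x0, hx0⟩ : ∃ a, a = x.coeff (Multiplicative.ofAdd 0) := ⟨_, rfl⟩
    obtain ⟨x1, hx1⟩ : ∃ a, a = x.coeff (Multiplicative.ofAdd 1) := ⟨_, rfl⟩
    obtain ⟨x2, hx2⟩ : ∃ a, a = x.coeff (Multiplicative.ofAdd 2) := ⟨_, rfl⟩
    obtain ⟨x3, hx3⟩ : ∃ a, a = x.coeff (Multiplicative.ofAdd 3) := ⟨_, rfl⟩
    intro k
    rcases h k with rfl | rfl | rfl | rfl <;>
      simp only [MonoidAlgebra.coeff_add, MonoidAlgebra.coeff_single, Finsupp.single_apply,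
        Finsupp.add_apply, EmbeddingLike.apply_eq_iff_eq, if_true, if_false, h1, h2, h3, h4, h5, h6,
        h1.symm, h2.symm, h3.symm, h4.symm, h5.symm, h6.symm, ← hx0, ← hx1, ← hx2, ← hx3]
    · linear_combination ((x0 + x2) * t + x0) * ht
    · linear_combination ((x1 + x3) * t + x1) * ht
    · linear_combination ((x0 + x2) * t + x2) * ht
    · linear_combination ((x1 + x3) * t + x3) * ht
  right_inv y := by
    have h1 : (0 : ZMod 4) ≠ 1 ∧ (0 : ZMod 4) ≠ 2 ∧ (0 : ZMod 4) ≠ 3 ∧ (1 : ZMod 4) ≠ 2 ∧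
      (1 : ZMod 4) ≠ 3 ∧ (2 : ZMod 4) ≠ 3 := by decide
    obtain ⟨h1, h2, h3, h4, h5, h6⟩ := h1
    ext <;>
      simp only [MonoidAlgebra.coeff_add, MonoidAlgebra.coeff_single, Finsupp.single_apply,
        Finsupp.add_apply, EmbeddingLike.apply_eq_iff_eq, if_true, if_false, h1, h2, h3, h4, h5, h6,
        h1.symm, h2.symm, h3.symm, h4.symm, h5.symm, h6.symm]
    · linear_combination (y.1 * 2 * t + y.1) * ht
    · linear_combination (y.2.1 * 2 * t + y.2.1) * ht
    · linear_combination y.2.2.re * ht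
    · linear_combination y.2.2.im * ht
  map_add' x y := by
    ext <;> simp only [MonoidAlgebra.coeff_add, Finsupp.add_apply, Prod.fst_add, Prod.snd_add,
      QuadraticAlgebra.re_add, QuadraticAlgebra.im_add] <;>
      ring
  map_mul' x y := by
    have h1 : (0 - 1 : ZMod 4) = 3 := by decide
    have h2 : (0 - 2 : ZMod 4) = 2 := by decide
    have h3 : (0 - 3 : ZMod 4) = 1 := by decide
    have h4 : (1 - 2 : ZMod 4) = 3 := by decide
    have h5 : (1 - 3 : ZMod 4) = 2 := by decide
    have h6 : (2 - 3 : ZMod 4) = 3 := by decide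
    have h7 : (2 - 1 : ZMod 4) = 1 := by decide
    have h8 : (3 - 1 : ZMod 4) = 2 := by decide
    have h9 : (3 - 2 : ZMod 4) = 1 := by decide
    ext <;> simp only [coeff_mul_zmod, zsum4, Prod.fst_mul, Prod.snd_mul, sub_zero, sub_self,
      QuadraticAlgebra.re_mul, QuadraticAlgebra.im_mul, h1, h2, h3, h4, h5, h6, h7, h8, h9] <;>
      ring

def eQ (S : Type*) [CommRing S] (t i : S) (ht : 2 * t = 1) (hi : i * i = -1) :
    QuadraticAlgebra S (-1) 0 ≃+* S × S where
  toFun z := (z.re + i * z.im, z.re - i * z.im)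
  invFun y := ⟨t * (y.1 + y.2), -i * t * (y.1 - y.2)⟩
  left_inv z := by
    ext <;> dsimp only
    · linear_combination z.re * ht
    · linear_combination z.im * ht - 2 * t * z.im * hi
  right_inv y := by
    ext <;> dsimp only
    · linear_combination y.1 * ht - t * (y.1 - y.2) * hi
    · linear_combination y.2 * ht + t * (y.1 - y.2) * hi
  map_add' x y := by
    ext <;> simp only [Prod.fst_add, Prod.snd_add,
      QuadraticAlgebra.re_add, QuadraticAlgebra.im_add] <;> ring
  map_mul' x y := by
    ext <;> simp only [Prod.fst_mul, Prod.snd_mul,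
      QuadraticAlgebra.re_mul, QuadraticAlgebra.im_mul]
    · linear_combination - x.im * y.im * hi
    · linear_combination - x.im * y.im * hi

/-- Units of a product ring. -/
theorem units_prod {R A B : Type*} [CommRing R] [CommRing A] [CommRing B] (e : R ≃+* A × B) :
    Nonempty (Rˣ ≃* Aˣ × Bˣ) :=
  ⟨(Units.mapEquiv e.toMulEquiv).trans MulEquiv.prodUnits⟩

def appendE (k l : ℕ) (G : Type*) [CommGroup G] :
    (Fin k → G) × (Fin l → G) ≃* (Fin (k + l) → G) where
  toFun f := Fin.append f.1 f.2
  invFun f := (fun i => f (Fin.castAdd l i), fun i => f (Fin.natAdd k i))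
  left_inv f := by ext <;> simp
  right_inv f := by
    ext i
    refine Fin.addCases (fun i => ?_) (fun i => ?_) i <;> simp
  map_mul' f g := by
    ext i
    refine Fin.addCases (fun i => ?_) (fun i => ?_) i <;> simp

theorem dbl1 {X Y G : Type*} [CommGroup X] [CommGroup Y] [CommGroup G] {k : ℕ}
    (hY : Nonempty (Y ≃* X × X)) (h : Nonempty (X ≃* (Fin k → G))) :
    Nonempty (Y ≃* (Fin (k + k) → G)) := by
  obtain ⟨a⟩ := hY
  obtain ⟨b⟩ := h
  exact ⟨(a.trans (b.prodCongr b)).trans (appendE k k G)⟩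

theorem dbl2 {X Y G H : Type*} [CommGroup X] [CommGroup Y] [CommGroup G] [CommGroup H] {k l : ℕ}
    (hY : Nonempty (Y ≃* X × X)) (h : Nonempty (X ≃* (Fin k → G) × (Fin l → H))) :
    Nonempty (Y ≃* (Fin (k + k) → G) × (Fin (l + l) → H)) := by
  obtain ⟨a⟩ := hY
  obtain ⟨b⟩ := h
  exact ⟨((a.trans (b.prodCongr b)).trans (MulEquiv.prodProdProdComm _ _ _ _)).trans
    ((appendE k k G).prodCongr (appendE l l H))⟩

theorem step2 (A H : Type*) [CommRing A] [CommGroup H] (t : A) (ht : 2 * t = 1) :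
    Nonempty ((MonoidAlgebra A (C 2 × H))ˣ ≃* (MonoidAlgebra A H)ˣ × (MonoidAlgebra A H)ˣ) := by
  refine units_prod (MonoidAlgebra.curryRingEquiv.trans (e2 _ (algebraMap A _ t) ?_))
  rw [← map_ofNat (algebraMap A (MonoidAlgebra A H)) 2, ← map_mul, ht, map_one]

theorem step1 (A : Type*) [CommRing A] (t : A) (ht : 2 * t = 1) :
    Nonempty ((MonoidAlgebra A (C 2))ˣ ≃* Aˣ × Aˣ) := units_prod (e2 _ t ht)

theorem curry_units (F H K : Type*) [CommRing F] [CommGroup H] [CommGroup K] :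
    Nonempty ((MonoidAlgebra F (H × K))ˣ ≃* (MonoidAlgebra (MonoidAlgebra F H) K)ˣ) := by
  have a : MonoidAlgebra F (H × K) ≃+* MonoidAlgebra F (K × H) :=
    MonoidAlgebra.mapDomainRingEquiv F (MulEquiv.prodComm : H × K ≃* K × H)
  have b : MonoidAlgebra F (K × H) ≃+* MonoidAlgebra (MonoidAlgebra F H) K :=
    MonoidAlgebra.curryRingEquiv
  exact ⟨Units.mapEquiv (a.trans b).toMulEquiv⟩

theorem units_cyc (K : Type*) [Field K] [Finite K] (q : ℕ) (hq : Nat.card K = q) :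
    Nonempty (Kˣ ≃* C (q - 1)) := by
  have h : Nat.card Kˣ = q - 1 := by rw [Nat.card_units, hq]
  rw [← h]
  exact ⟨(zmodCyclicMulEquiv inferInstance).symm⟩

def one1 (G : Type*) [CommGroup G] : G ≃* (Fin 1 → G) where
  toFun g := fun _ => g
  invFun f := f 0
  left_inv _ := rfl
  right_inv f := by ext i; rw [Subsingleton.elim i 0]
  map_mul' _ _ := rfl

theorem unit_group_stmt_11 (F : Type*) [Field F] [Fintype F] (p n : ℕ)
    (hp : p.Prime) (hp2 : 2 < p) [CharP F p] (hn : 0 < n)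
    (hF : Fintype.card F = p ^ n) :
    (((p ^ n : ZMod 4) = 1) →
      Nonempty ((MonoidAlgebra F (C 4 × C 2 × C 2 × C 2))ˣ ≃* ((Fin (32) → C (p ^ n - 1))))) ∧
    (((p ^ n : ZMod 4) = -1) →
      Nonempty ((MonoidAlgebra F (C 4 × C 2 × C 2 × C 2))ˣ ≃* ((Fin (16) → C (p ^ n - 1)) × (Fin (8) → C (p ^ (2 * n) - 1))))) := by
  have h2 : (2 : F) ≠ 0 := by
    intro h
    have h' : ((2 : ℕ) : F) = 0 := by exact_mod_cast h
    rw [CharP.cast_eq_zero_iff F p] at h'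
    have := Nat.le_of_dvd (by norm_num) h'
    omega
  obtain ⟨t, ht⟩ : ∃ t : F, 2 * t = 1 := ⟨2⁻¹, mul_inv_cancel₀ h2⟩
  have ht' : 2 * algebraMap F (MonoidAlgebra F (C 4)) t = 1 := by
    rw [← map_ofNat (algebraMap F (MonoidAlgebra F (C 4))) 2, ← map_mul, ht, map_one]
  obtain ⟨c⟩ := curry_units F (C 4) (C 2 × C 2 × C 2)
  obtain ⟨uF⟩ := units_cyc F (p ^ n) (by rw [Nat.card_eq_fintype_card, hF])
  obtain ⟨e⟩ := units_prod (e4 F t ht)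
  have e' := e.trans ((MulEquiv.refl Fˣ).prodCongr MulEquiv.prodUnits)
  have s1 := step1 _ _ ht'
  have s2 := step2 _ (C 2) _ ht'
  have s3 := step2 _ (C 2 × C 2) _ ht'
  have toF1 := uF.trans (one1 _)
  constructor
  · intro h
    have hsq : IsSquare (-1 : F) := by
      rw [FiniteField.isSquare_neg_one_iff, hF]
      intro h3
      have : ((p ^ n : ℕ) : ZMod 4) = ((3 : ℕ) : ZMod 4) := by
        rw [ZMod.natCast_eq_natCast_iff]; exact h3
      push_cast at this
      rw [h] at this
      revert this; decide
    obtain ⟨i, hi⟩ := hsq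
    obtain ⟨f⟩ := units_prod (eQ F t i ht hi.symm)
    have g2 := ((toF1.prodCongr toF1).trans (appendE 1 1 _))
    have b : Nonempty ((MonoidAlgebra F (C 4))ˣ ≃* (Fin 4 → C (p ^ n - 1))) :=
      ⟨((e'.trans MulEquiv.prodAssoc.symm).trans
        (g2.prodCongr (f.trans g2))).trans (appendE 2 2 _)⟩
    obtain ⟨r⟩ := dbl1 s3 (dbl1 s2 (dbl1 s1 b))
    exact ⟨c.trans r⟩
  · intro h
    have hsq : ¬ IsSquare (-1 : F) := by
      rw [FiniteField.isSquare_neg_one_iff, hF, not_not]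
      have : ((p ^ n : ℕ) : ZMod 4) = ((3 : ℕ) : ZMod 4) := by
        push_cast
        rw [h]; decide
      rw [ZMod.natCast_eq_natCast_iff] at this
      exact this
    haveI : Fact (∀ r : F, r ^ 2 ≠ (-1) + 0 * r) := ⟨fun r hr => hsq ⟨r, by
      linear_combination - hr⟩⟩
    haveI : Finite (QuadraticAlgebra F (-1) 0) :=
      Finite.of_equiv _ (QuadraticAlgebra.equivProd (-1 : F) 0).symm
    obtain ⟨uQ⟩ := units_cyc (QuadraticAlgebra F (-1) 0) (p ^ (2 * n)) (by
      rw [Nat.card_congr (QuadraticAlgebra.equivProd (-1 : F) 0), Nat.card_prod,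
        Nat.card_eq_fintype_card, hF]; ring)
    have g2 := ((toF1.prodCongr toF1).trans (appendE 1 1 _))
    have b : Nonempty ((MonoidAlgebra F (C 4))ˣ ≃*
        (Fin 2 → C (p ^ n - 1)) × (Fin 1 → C (p ^ (2 * n) - 1))) :=
      ⟨(e'.trans MulEquiv.prodAssoc.symm).trans
        (g2.prodCongr (uQ.trans (one1 _)))⟩
    obtain ⟨r⟩ := dbl2 s3 (dbl2 s2 (dbl2 s1 b))
    exact ⟨c.trans r⟩
end
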